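/- Let H=(V_H,E_H) be a fixed graph with at least two edges, let P be a strict partial order on E_H, let ψ be a label multiplicity distribution, and set ρ_H = min over subgraphs I=(V_I,E_I) of H with at least two edges of |V_I|/(|E_I|−1). If δ:ℕ→(0,1) satisfies δ(n)·n^{ρ_H} → ∞ as n→∞, then the probability that a random temporal graph drawn from Γ_{[n]}(ψ) contains (H,P) as a δ(n)-temporal motif tends to 1 as n→∞. -/

import Mathlib

open MeasureTheory ProbabilityTheory Filter Set
open scoped ENNReal NNReal Topology

noncomputable section

namespace RTG

/-- A temporal graph on vertex type `V`, given by the finite set of real time labels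
attached to each potential edge (unordered pair of vertices). -/
abbrev TGraph (V : Type*) := Sym2 V → Finset ℝ

/-- `P` is a strict partial order supported on the set `s`. -/
def StrictPartialOrderOn {α : Type*} (s : Set α) (P : α → α → Prop) : Prop :=
  (∀ a, ¬ P a a) ∧ (∀ a b c, P a b → P b c → P a c) ∧ ∀ a b, P a b → a ∈ s ∧ b ∈ s

/-- The temporal graph `Λ` contains `(H, P)` as a `δ`-temporal motif. -/
def Contains {VH V : Type*} (H : SimpleGraph VH) (P : Sym2 VH → Sym2 VH → Prop)
    (Λ : TGraph V) (δ : ℝ) : Prop :=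
  ∃ Φ : VH → V, Function.Injective Φ ∧
    ∃ lab : Sym2 VH → ℝ,
      (∀ e ∈ H.edgeSet, lab e ∈ Λ (Sym2.map Φ e)) ∧
      (∀ e f, P e f → lab e < lab f) ∧
      (∀ e ∈ H.edgeSet, ∀ f ∈ H.edgeSet, lab e - lab f < δ)

/-- The sparsity `ρ_H` of a graph `H`: the minimum over subgraphs with at least two
edges of `|V_I| / (|E_I| - 1)`. -/
def sparsity {VH : Type*} (H : SimpleGraph VH) : ℝ :=
  sInf {x : ℝ | ∃ I : H.Subgraph, 2 ≤ I.edgeSet.ncard ∧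
    x = (I.verts.ncard : ℝ) / ((I.edgeSet.ncard : ℝ) - 1)}

/-- The space of label data on a single edge: a number `k` of labels together with the
tuple of `k` label values (indexed in order of sampling). -/
abbrev LabelSpace := Σ k : ℕ, Fin k → ℝ

/-- The uniform distribution on `(0, 1]`. -/
def unif01 : Measure ℝ := volume.restrict (Set.Ioc 0 1)

/-- The uniform distribution on `{1, …, T}` (as a measure on `ℝ`). -/
def unifDisc (T : ℕ) : Measure ℝ :=
  (T : ℝ≥0∞)⁻¹ • ∑ k ∈ Finset.Icc 1 T, Measure.dirac (k : ℝ)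

/-- The distribution of the label data of a single edge: the number of labels is drawn
according to `ψ` and, independently, each label value is drawn according to `ν`. -/
def edgeMeasure (ν : Measure ℝ) (ψ : Measure ℕ) : Measure LabelSpace :=
  Measure.sum fun k => ψ {k} • (Measure.pi fun _ : Fin k => ν).map (Sigma.mk k)

/-- The doubly random temporal graph model on vertex set `V` with label value
distribution `ν` and label multiplicity distribution `ψ`: all edges receive independent
identically distributed label data. -/
def model (V : Type*) [Fintype V] [DecidableEq V] (ν : Measure ℝ) (ψ : Measure ℕ) :
    Measure (Sym2 V → LabelSpace) :=
  Measure.pi fun _ : Sym2 V => edgeMeasure ν ψ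

/-- The continuous doubly random temporal graph `Γ_V(ψ)`. -/
abbrev contModel (V : Type*) [Fintype V] [DecidableEq V] (ψ : Measure ℕ) :
    Measure (Sym2 V → LabelSpace) := model V unif01 ψ

/-- The discrete doubly random temporal graph `Γ_V(ψ, T)`. -/
abbrev discModel (V : Type*) [Fintype V] [DecidableEq V] (ψ : Measure ℕ) (T : ℕ) :
    Measure (Sym2 V → LabelSpace) := model V (unifDisc T) ψ

/-- The temporal graph determined by a sample `ω` of the model: each non-loop edge
carries the sampled set of labels. -/
def toTGraph {V : Type*} [DecidableEq V] (ω : Sym2 V → LabelSpace) : TGraph V :=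
  fun e => if e.IsDiag then ∅ else Finset.image (ω e).2 Finset.univ

/-- The `T`-discretization of a temporal graph: each label `l` is replaced by `⌈T·l⌉`. -/
def discretize {V : Type*} (T : ℕ) (Λ : TGraph V) : TGraph V :=
  fun e => (Λ e).image fun l => ((⌈(T : ℝ) * l⌉ : ℤ) : ℝ)

/-- `ψ` is a label multiplicity distribution: a probability distribution on `ℕ` with
positive finite mean and finite second moment. -/
def IsLMD (ψ : Measure ℕ) : Prop :=
  IsProbabilityMeasure ψ ∧ Integrable (fun k : ℕ => (k : ℝ)) ψ ∧
    Integrable (fun k : ℕ => (k : ℝ) ^ 2) ψ ∧ 0 < ∫ k, (k : ℝ) ∂ψ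

/-- The mean `r` of a label multiplicity distribution. -/
def lmdMean (ψ : Measure ℕ) : ℝ := ∫ k, (k : ℝ) ∂ψ

/-- The second moment `r₂` of a label multiplicity distribution. -/
def lmdSq (ψ : Measure ℕ) : ℝ := ∫ k, (k : ℝ) ^ 2 ∂ψ

/-- `q = P[Q > 0]` for a label multiplicity distribution. -/
def lmdPos (ψ : Measure ℕ) : ℝ := (ψ {k | 0 < k}).toReal

/-- `v` is reachable from the set `S` by time `t` in the temporal graph `Λ`. -/
def ReachBy {V : Type*} (Λ : TGraph V) (S : Set V) (t : ℝ) (v : V) : Prop :=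
  v ∈ S ∨ ∃ (k : ℕ) (f : ℕ → V) (ts : ℕ → ℝ), 0 < k ∧ f 0 ∈ S ∧ f k = v ∧
    (∀ i < k, ts i ∈ Λ s(f i, f (i + 1))) ∧
    (∀ i j, i < j → j < k → ts i < ts j) ∧ ts (k - 1) ≤ t

/-- The reachability ball `B_Λ(S, t)`. -/
def ball {V : Type*} (Λ : TGraph V) (S : Set V) (t : ℝ) : Set V := {v | ReachBy Λ S t v}

/-- The doubling time of the set `S` in `Λ` (with value `∞` if the reachability ball
never doubles in size). -/
def doubleTime {V : Type*} (Λ : TGraph V) (S : Set V) : ℝ≥0∞ :=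
  ⨅ (t : ℝ) (_ : 0 ≤ t ∧ 2 * S.ncard ≤ (ball Λ S t).ncard), ENNReal.ofReal t

/-- The doubling time of the temporal graph `Λ`: the maximum doubling time over all
nonempty vertex sets of size at most half the number of vertices. -/
def doubleAll {V : Type*} [Fintype V] (Λ : TGraph V) : ℝ≥0∞ :=
  ⨆ (S : Set V) (_ : S.Nonempty ∧ 2 * S.ncard ≤ Fintype.card V), doubleTime Λ S

/-- `Double⁻`: the maximum doubling time over nonempty sets of size at most `n/4`. -/
def doubleSmall {V : Type*} [Fintype V] (Λ : TGraph V) : ℝ≥0∞ :=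
  ⨆ (S : Set V) (_ : S.Nonempty ∧ 4 * S.ncard ≤ Fintype.card V), doubleTime Λ S

/-- `Double⁺`: the maximum doubling time over sets of size in `(n/4, n/2]`. -/
def doubleLarge {V : Type*} [Fintype V] (Λ : TGraph V) : ℝ≥0∞ :=
  ⨆ (S : Set V) (_ : Fintype.card V < 4 * S.ncard ∧ 2 * S.ncard ≤ Fintype.card V),
    doubleTime Λ S

/-- The partial reversal `ℛ(Λ, t)`: every label `l < t` is replaced by `t - l`. -/
def reverse {V : Type*} (Λ : TGraph V) (t : ℝ) : TGraph V :=
  fun e => (Λ e).image fun l => if l < t then t - l else l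

/-- The rank of a time `x` among all the labels of the sample `ω`: the number of labels
(on genuine, non-loop, edges) that are at most `x`. -/
def rank {V : Type*} [Fintype V] [DecidableEq V] (ω : Sym2 V → LabelSpace) (x : ℝ) : ℕ :=
  ∑ e ∈ Finset.univ.filter (fun e : Sym2 V => ¬ e.IsDiag),
    Nat.card {i : Fin (ω e).1 // (ω e).2 i ≤ x}

/-- The order discretization `𝒢^O` of the sample `ω`: each label is replaced by its rank
among all labels. -/
def orderDisc {V : Type*} [Fintype V] [DecidableEq V] (ω : Sym2 V → LabelSpace) :
    TGraph V :=
  fun e => if e.IsDiag then ∅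
    else Finset.image (fun i => (rank ω ((ω e).2 i) : ℝ)) Finset.univ


/-- Second moment inequality for a finite family of events. -/
lemma second_moment {Ω ι : Type*} [MeasurableSpace Ω] (μ : Measure Ω) [IsProbabilityMeasure μ]
    [Fintype ι] (A : ι → Set Ω) (hA : ∀ i, MeasurableSet (A i)) :
    (1 - μ.real (⋃ i, A i)) * (∑ i, μ.real (A i)) ^ 2 ≤
      ∑ i, ∑ j, μ.real (A i ∩ A j) - (∑ i, μ.real (A i)) ^ 2 := by
  classical
  set M := ∑ i, μ.real (A i) with hM
  have hU : MeasurableSet (⋃ i, A i) := MeasurableSet.iUnion hA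
  have hint : ∀ s : Set Ω, MeasurableSet s → Integrable (s.indicator (fun _ => (1:ℝ))) μ :=
    fun s hs => (integrable_const (1:ℝ)).indicator hs
  have hval : ∀ s : Set Ω, MeasurableSet s → ∫ x, s.indicator (fun _ => (1:ℝ)) x ∂μ = μ.real s := by
    intro s hs
    rw [integral_indicator_const _ hs]; simp
  set f : Ω → ℝ := fun x => (⋃ i, A i)ᶜ.indicator (fun _ => (1:ℝ)) x * M ^ 2 with hf
  set g : Ω → ℝ := fun x => (∑ i, ∑ j, (A i ∩ A j).indicator (fun _ => (1:ℝ)) x)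
      - 2 * M * (∑ i, (A i).indicator (fun _ => (1:ℝ)) x) + M ^ 2 with hg
  have hg' : ∀ x, g x = ((∑ i, (A i).indicator (fun _ => (1:ℝ)) x) - M) ^ 2 := by
    intro x
    have : ∑ i, ∑ j, (A i ∩ A j).indicator (fun _ => (1:ℝ)) x =
        (∑ i, (A i).indicator (fun _ => (1:ℝ)) x) * (∑ i, (A i).indicator (fun _ => (1:ℝ)) x) := by
      rw [Finset.sum_mul_sum]
      refine Finset.sum_congr rfl fun i _ => Finset.sum_congr rfl fun j _ => ?_
      by_cases h1 : x ∈ A i <;> by_cases h2 : x ∈ A j <;> simp [h1, h2]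
    simp only [hg, this]; ring
  have hfi : Integrable f μ := (hint _ hU.compl).mul_const _
  have hi1 : Integrable (fun x => ∑ i, ∑ j, (A i ∩ A j).indicator (fun _ => (1:ℝ)) x) μ :=
    integrable_finsetSum _ fun i _ => integrable_finsetSum _ fun j _ =>
      hint _ ((hA i).inter (hA j))
  have hi2 : Integrable (fun x => ∑ i, (A i).indicator (fun _ => (1:ℝ)) x) μ :=
    integrable_finsetSum _ fun i _ => hint _ (hA i)
  have hgi : Integrable g μ := (hi1.sub (hi2.const_mul _)).add (integrable_const _)
  have hle : ∫ x, f x ∂μ ≤ ∫ x, g x ∂μ := by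
    refine integral_mono hfi hgi fun x => ?_
    rw [hg']
    by_cases hx : x ∈ ⋃ i, A i
    · have : f x = 0 := by simp only [hf]; rw [indicator_of_notMem (by simpa using hx)]; simp
      rw [this]; positivity
    · have h0 : ∀ i, (A i).indicator (fun _ => (1:ℝ)) x = 0 := by
        intro i
        apply indicator_of_notMem
        intro h; exact hx (mem_iUnion.2 ⟨i, h⟩)
      have : f x = M ^ 2 := by simp only [hf]; rw [indicator_of_mem (by simpa using hx)]; simp
      rw [this]; simp [h0]
  have hL : ∫ x, f x ∂μ = (1 - μ.real (⋃ i, A i)) * M ^ 2 := by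
    simp only [hf]
    rw [integral_mul_const, hval _ hU.compl, probReal_compl_eq_one_sub hU]
  have hR : ∫ x, g x ∂μ = ∑ i, ∑ j, μ.real (A i ∩ A j) - M ^ 2 := by
    simp only [hg]
    have hi3 : Integrable (fun x => (∑ i, ∑ j, (A i ∩ A j).indicator (fun _ => (1:ℝ)) x)
      - 2 * M * (∑ i, (A i).indicator (fun _ => (1:ℝ)) x)) μ := hi1.sub (hi2.const_mul _)
    rw [integral_add hi3 (integrable_const _),
      integral_sub hi1 (hi2.const_mul _), integral_const_mul,
      integral_finsetSum _ (fun i _ => integrable_finsetSum _ fun j _ =>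
        hint _ ((hA i).inter (hA j))), integral_finsetSum _ (fun i _ => hint _ (hA i))]
    have e1 : ∀ i, ∫ x, ∑ j, (A i ∩ A j).indicator (fun _ => (1:ℝ)) x ∂μ
        = ∑ j, μ.real (A i ∩ A j) := by
      intro i
      rw [integral_finsetSum _ (fun j _ => hint _ ((hA i).inter (hA j)))]
      exact Finset.sum_congr rfl fun j _ => hval _ ((hA i).inter (hA j))
    rw [Finset.sum_congr rfl fun i _ => e1 i, Finset.sum_congr rfl fun i _ => hval _ (hA i), ← hM]
    simp; ring
  rw [← hL, ← hR]; exact hle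

/-- The probability that prescribed independent coordinates land in prescribed sets. -/
lemma pi_constraint {ι X : Type*} [Fintype ι] [DecidableEq ι] [MeasurableSpace X] (ν : Measure X)
    [IsProbabilityMeasure ν] (B : ℕ → Set X) (p : ℝ) (K : Finset ι) (t : ι → ℕ)
    (hp : ∀ x ∈ K, ν.real (B (t x)) = p) :
    (Measure.pi fun _ : ι => ν).real {ω | ∀ x ∈ K, ω x ∈ B (t x)} = p ^ K.card := by
  have : {ω : ι → X | ∀ x ∈ K, ω x ∈ B (t x)} =
      Set.univ.pi (fun x => if x ∈ K then B (t x) else Set.univ) := by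
    ext ω
    simp only [mem_ofPred_eq, Set.mem_pi, mem_univ, true_implies]
    refine forall_congr' fun x => ?_
    by_cases h : x ∈ K <;> simp [h]
  rw [this, measureReal_def, Measure.pi_pi, ENNReal.toReal_prod]
  have h2 : ∀ x, (ν (if x ∈ K then B (t x) else Set.univ)).toReal = if x ∈ K then p else 1 := by
    intro x
    by_cases h : x ∈ K
    · simpa [h, measureReal_def] using hp x h
    · simp [h]
  simp [h2]

/-- Label data whose first label lies in the `t`-th time slot of width `w`. -/
def slot (w : ℝ) (t : ℕ) : Set LabelSpace :=
  {l | ∃ h : 0 < l.1, l.2 ⟨0, h⟩ ∈ Ioc ((t : ℝ) * w) (((t : ℝ) + 1) * w)}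

lemma measurableSet_sigma' {s : Set LabelSpace} (h : ∀ k, MeasurableSet (Sigma.mk k ⁻¹' s)) :
    MeasurableSet s :=
  MeasurableSpace.measurableSet_iInf.2 h

lemma measurable_mk' (k : ℕ) : Measurable (@Sigma.mk ℕ (fun k => Fin k → ℝ) k) :=
  fun _ hs => MeasurableSpace.measurableSet_iInf.1 hs k

lemma preimage_slot (w : ℝ) (t k : ℕ) (hk : 0 < k) :
    Sigma.mk k ⁻¹' (slot w t) = Function.eval (⟨0, hk⟩ : Fin k) ⁻¹'
      Ioc ((t : ℝ) * w) (((t : ℝ) + 1) * w) := by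
  ext f; simp [slot, hk]

lemma preimage_slot_zero (w : ℝ) (t : ℕ) :
    Sigma.mk 0 ⁻¹' (slot w t) = ∅ := by
  ext f; simp [slot]

lemma measurableSet_slot (w : ℝ) (t : ℕ) : MeasurableSet (slot w t) := by
  apply measurableSet_sigma'
  intro k
  rcases Nat.eq_zero_or_pos k with rfl | hk
  · rw [preimage_slot_zero]; exact MeasurableSet.empty
  · rw [preimage_slot w t k hk]
    exact (measurable_pi_apply _) measurableSet_Ioc

lemma slot_disjoint {w : ℝ} (hw : 0 < w) {t t' : ℕ} (h : t ≠ t') {l : LabelSpace}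
    (h1 : l ∈ slot w t) (h2 : l ∈ slot w t') : False := by
  obtain ⟨ha, h1, h1'⟩ := h1
  obtain ⟨hb, h2, h2'⟩ := h2
  have a1 : (t : ℝ) < t' + 1 := lt_of_mul_lt_mul_right (h1.trans_le h2') hw.le
  have a2 : (t' : ℝ) < t + 1 := lt_of_mul_lt_mul_right (h2.trans_le h1') hw.le
  norm_cast at a1 a2
  omega

instance : IsProbabilityMeasure unif01 := by
  constructor; simp [unif01]

lemma edgeMeasure_prob (ψ : Measure ℕ) [IsProbabilityMeasure ψ] :
    IsProbabilityMeasure (edgeMeasure unif01 ψ) := by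
  constructor
  rw [edgeMeasure, Measure.sum_apply _ MeasurableSet.univ]
  have : ∀ k : ℕ, (ψ {k} • (Measure.pi fun _ : Fin k => unif01).map (@Sigma.mk ℕ (fun k => Fin k → ℝ) k)) univ = ψ {k} := by
    intro k
    rw [Measure.smul_apply, Measure.map_apply (measurable_mk' k) MeasurableSet.univ]
    simp
  simp_rw [this]
  have := Measure.tsum_indicator_apply_singleton ψ univ MeasurableSet.univ
  simpa using this

lemma edgeMeasure_slot (ψ : Measure ℕ) [IsProbabilityMeasure ψ] (w : ℝ) (hw : 0 < w) (t : ℕ)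
    (ht : ((t : ℝ) + 1) * w ≤ 1) :
    (edgeMeasure unif01 ψ).real (slot w t) = ψ.real {k | 0 < k} * w := by
  have key : edgeMeasure unif01 ψ (slot w t) = ψ {k | 0 < k} * ENNReal.ofReal w := by
    rw [edgeMeasure, Measure.sum_apply _ (measurableSet_slot w t)]
    have : ∀ k : ℕ, (ψ {k} • (Measure.pi fun _ : Fin k => unif01).map (@Sigma.mk ℕ (fun k => Fin k → ℝ) k)) (slot w t) =
        ({k : ℕ | 0 < k}.indicator (fun k => ψ {k}) k) * ENNReal.ofReal w := by
      intro k
      rw [Measure.smul_apply, Measure.map_apply (measurable_mk' k) (measurableSet_slot w t)]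
      rcases Nat.eq_zero_or_pos k with rfl | hk
      · rw [preimage_slot_zero]; simp
      · rw [preimage_slot w t k hk,
          (measurePreserving_eval (fun _ : Fin k => unif01) ⟨0, hk⟩).measure_preimage
            measurableSet_Ioc.nullMeasurableSet, unif01,
          Measure.restrict_apply measurableSet_Ioc, inter_eq_left.2, Real.volume_Ioc]
        · simp only [indicator, mem_ofPred_eq, hk, if_true, smul_eq_mul]
          congr 2; ring
        · intro x hx
          exact ⟨lt_of_le_of_lt (by positivity) hx.1, hx.2.trans ht⟩
    simp_rw [this]
    rw [ENNReal.tsum_mul_right, Measure.tsum_indicator_apply_singleton ψ _ (MeasurableSet.of_discrete)]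
  rw [measureReal_def, key, ENNReal.toReal_mul, ENNReal.toReal_ofReal hw.le, measureReal_def]

lemma lmd_pos (ψ : Measure ℕ) (hψ : IsLMD ψ) : 0 < ψ.real {k | 0 < k} := by
  obtain ⟨h1, h2, h3, h4⟩ := hψ
  by_contra h
  have h0 : ψ {k | 0 < k} = 0 := by
    have : ψ.real {k | 0 < k} = 0 := le_antisymm (not_lt.1 h) measureReal_nonneg
    rwa [measureReal_eq_zero_iff] at this
  have : ∫ k, (k : ℝ) ∂ψ = 0 := by
    apply integral_eq_zero_of_ae
    rw [Filter.EventuallyEq, ae_iff]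
    refine measure_mono_null ?_ h0
    intro k hk
    simp at hk ⊢; omega
  linarith

section counting

variable {VH : Type} [Fintype VH] [DecidableEq VH]

/-- Vertices covered by a set of edges. -/
def vset (S : Finset (Sym2 VH)) : Finset VH := by
  classical exact Finset.univ.filter fun v => ∃ e ∈ S, v ∈ e

lemma mem_vset (S : Finset (Sym2 VH)) (v : VH) : v ∈ vset S ↔ ∃ e ∈ S, v ∈ e := by
  simp [vset]

/-- The edges of the first copy shared with the second copy. -/
def overlap {n : ℕ} (E : Finset (Sym2 VH)) (Φ Φ' : VH ↪ Fin n) : Finset (Sym2 VH) :=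
  E.filter fun e => Sym2.map Φ e ∈ E.image (Sym2.map Φ')

lemma count_overlap {n : ℕ} (E S : Finset (Sym2 VH)) :
    (((Finset.univ : Finset ((VH ↪ Fin n) × (VH ↪ Fin n))).filter
      fun x => overlap E x.1 x.2 = S).card : ℝ) * (n : ℝ) ^ (vset S).card ≤
      (Fintype.card VH : ℝ) ^ (Fintype.card VH) * (n : ℝ) ^ (2 * Fintype.card VH) := by
  classical
  set v := Fintype.card VH with hv
  -- for fixed second embedding
  have h1 : ∀ Φ' : VH ↪ Fin n, ((Finset.univ : Finset (VH ↪ Fin n)).filter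
      fun Φ => overlap E Φ Φ' = S).card * n ^ (vset S).card ≤ v ^ v * n ^ v := by
    intro Φ'
    have h2 : ((Finset.univ : Finset (VH ↪ Fin n)).filter
      fun Φ => overlap E Φ Φ' = S).card ≤ (Fintype.piFinset (fun a : VH =>
        if a ∈ vset S then Finset.univ.image Φ' else Finset.univ)).card := by
      apply Finset.card_le_card_of_injOn (fun Φ : VH ↪ Fin n => (Φ : VH → Fin n))
      · intro Φ hΦ
        simp only [Finset.coe_filter, Finset.mem_univ, true_and, mem_ofPred_eq] at hΦ
        simp only [Finset.mem_coe, Fintype.mem_piFinset]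
        intro a
        split_ifs with ha
        · obtain ⟨e, he, hae⟩ := (mem_vset S a).1 ha
          rw [← hΦ, overlap, Finset.mem_filter, Finset.mem_image] at he
          obtain ⟨_, e', _, he'⟩ := he
          have : Φ a ∈ Sym2.map Φ e := Sym2.mem_map.2 ⟨a, hae, rfl⟩
          rw [← he', Sym2.mem_map] at this
          obtain ⟨b, _, hb⟩ := this
          exact Finset.mem_image.2 ⟨b, Finset.mem_univ _, hb⟩
        · exact Finset.mem_univ _
      · intro a _ b _ h
        exact DFunLike.coe_injective h
    have h3 : (Fintype.piFinset (fun a : VH =>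
        if a ∈ vset S then Finset.univ.image Φ' else Finset.univ)).card =
        v ^ (vset S).card * n ^ (v - (vset S).card) := by
      rw [Fintype.card_piFinset]
      have : ∀ a : VH, (if a ∈ vset S then Finset.univ.image Φ' else Finset.univ).card =
          if a ∈ vset S then v else n := by
        intro a
        split_ifs
        · rw [Finset.card_image_of_injective _ Φ'.injective, Finset.card_univ]
        · simp
      rw [Finset.prod_congr rfl fun a _ => this a, Finset.prod_ite, Finset.prod_const,
        Finset.prod_const, Finset.filter_not, Finset.card_sdiff_of_subset (Finset.filter_subset _ _)]
      simp [hv]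
    have hc : (vset S).card ≤ v := Finset.card_le_univ _
    calc _ ≤ (v ^ (vset S).card * n ^ (v - (vset S).card)) * n ^ (vset S).card :=
          Nat.mul_le_mul_right _ (h3 ▸ h2)
      _ = v ^ (vset S).card * n ^ v := by
          rw [mul_assoc, ← pow_add, Nat.sub_add_cancel hc]
      _ ≤ v ^ v * n ^ v := by
          apply Nat.mul_le_mul_right
          rcases Nat.eq_zero_or_pos v with h0 | h0
          · have : (vset S).card = 0 := by omega
            rw [this, h0]
          · exact Nat.pow_le_pow_right h0 hc
  have h4 : ((Finset.univ : Finset ((VH ↪ Fin n) × (VH ↪ Fin n))).filter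
      fun x => overlap E x.1 x.2 = S).card = ∑ Φ' : VH ↪ Fin n,
      ((Finset.univ : Finset (VH ↪ Fin n)).filter fun Φ => overlap E Φ Φ' = S).card := by
    simp only [Finset.card_filter]
    rw [Fintype.sum_prod_type_right]
  have h5 : Fintype.card (VH ↪ Fin n) ≤ n ^ v := by
    rw [Fintype.card_embedding_eq, Fintype.card_fin]
    exact Nat.descFactorial_le_pow _ _
  have h6 : ((Finset.univ : Finset ((VH ↪ Fin n) × (VH ↪ Fin n))).filter
      fun x => overlap E x.1 x.2 = S).card * n ^ (vset S).card ≤ v ^ v * n ^ (2 * v) := by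
    rw [h4, Finset.sum_mul]
    calc _ ≤ ∑ Φ' : VH ↪ Fin n, v ^ v * n ^ v := Finset.sum_le_sum fun Φ' _ => h1 Φ'
      _ = Fintype.card (VH ↪ Fin n) * (v ^ v * n ^ v) := by simp
      _ ≤ n ^ v * (v ^ v * n ^ v) := Nat.mul_le_mul_right _ h5
      _ = v ^ v * n ^ (2 * v) := by ring
  exact_mod_cast h6

/-- The event that the copy `Φ` of the edge set `E` uses time window `j`. -/
def ev {X : Type*} {n : ℕ} (E : Finset (Sym2 VH)) (σ : Sym2 VH → ℕ) (B : ℕ → Set X)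
    (Φ : VH ↪ Fin n) (j : ℕ) : Set (Sym2 (Fin n) → X) :=
  {ω | ∀ e ∈ E, ω (Sym2.map Φ e) ∈ B (j * E.card + σ e)}

lemma ev_eq {X : Type*} {n : ℕ} (E : Finset (Sym2 VH)) [Nonempty (Sym2 VH)]
    (σ : Sym2 VH → ℕ) (B : ℕ → Set X) (Φ : VH ↪ Fin n) (j : ℕ) :
    ev E σ B Φ j = {ω | ∀ x ∈ E.image (Sym2.map Φ), ω x ∈
      B (j * E.card + σ (Function.invFun (Sym2.map Φ) x))} := by
  ext ω
  have := Function.leftInverse_invFun (Sym2.map.injective Φ.injective)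
  simp only [ev, mem_ofPred_eq, Finset.forall_mem_image]
  refine forall₂_congr fun e _ => ?_
  rw [this e]

lemma ev_meas {X : Type*} [MeasurableSpace X] {n : ℕ} (E : Finset (Sym2 VH))
    (σ : Sym2 VH → ℕ) (B : ℕ → Set X) (hB : ∀ t, MeasurableSet (B t))
    (Φ : VH ↪ Fin n) (j : ℕ) : MeasurableSet (ev E σ B Φ j) := by
  have : ev E σ B Φ j = ⋂ e ∈ E, (fun ω : Sym2 (Fin n) → X => ω (Sym2.map Φ e)) ⁻¹'
      B (j * E.card + σ e) := by
    ext ω; simp [ev]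
  rw [this]
  exact Finset.measurableSet_biInter _ fun e _ => (measurable_pi_apply _) (hB _)

lemma slot_index {m J j s : ℕ} (hj : j < J) (hs : s < m) : j * m + s < J * m := by
  calc j * m + s < j * m + m := by omega
    _ = (j + 1) * m := by ring
    _ ≤ J * m := Nat.mul_le_mul_right _ hj

lemma motif_bound {X : Type*} [MeasurableSpace X] (ν : Measure X) [IsProbabilityMeasure ν]
    (E : Finset (Sym2 VH)) (hE : E.Nonempty) (σ : Sym2 VH → ℕ) (hσ : ∀ e ∈ E, σ e < E.card)
    (B : ℕ → Set X) (hB : ∀ t, MeasurableSet (B t))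
    (hdis : ∀ t t', t ≠ t' → ∀ l, l ∈ B t → l ∈ B t' → False)
    (p : ℝ) (hp : 0 < p) (J : ℕ) (hJ : 0 < J) (hBp : ∀ t < J * E.card, ν.real (B t) = p)
    (n : ℕ) (hn : 0 < n)
    (hN : (n : ℝ) ^ Fintype.card VH ≤ 2 ^ Fintype.card VH * (Fintype.card (VH ↪ Fin n) : ℝ)) :
    1 - (Measure.pi fun _ : Sym2 (Fin n) => ν).real
        (⋃ i : (VH ↪ Fin n) × Fin J, ev E σ B i.1 i.2) ≤
      ∑ S ∈ E.powerset.filter (fun S => S.Nonempty),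
        ((Fintype.card VH : ℝ) ^ Fintype.card VH * 4 ^ Fintype.card VH) /
          (J * p ^ S.card * (n : ℝ) ^ (vset S).card) := by
  classical
  set v := Fintype.card VH with hv
  set m := E.card with hm
  set μ := Measure.pi fun _ : Sym2 (Fin n) => ν with hμ
  set N : ℝ := (Fintype.card (VH ↪ Fin n) : ℝ) with hNdef
  have : Nonempty (Sym2 VH) := ⟨hE.choose⟩
  have hinvE : ∀ (Φ : VH ↪ Fin n), ∀ x ∈ E.image (Sym2.map Φ),
      Function.invFun (Sym2.map Φ) x ∈ E ∧ Sym2.map Φ (Function.invFun (Sym2.map Φ) x) = x := by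
    intro Φ x hx
    obtain ⟨e, he, rfl⟩ := Finset.mem_image.1 hx
    rw [Function.leftInverse_invFun (Sym2.map.injective Φ.injective) e]
    exact ⟨he, rfl⟩
  have hcard : ∀ (Φ : VH ↪ Fin n), (E.image (Sym2.map Φ)).card = m := fun Φ =>
    Finset.card_image_of_injective _ (Sym2.map.injective Φ.injective)
  have hpr : ∀ (Φ : VH ↪ Fin n) (j : Fin J), ∀ x ∈ E.image (Sym2.map Φ),
      ν.real (B ((j:ℕ) * m + σ (Function.invFun (Sym2.map Φ) x))) = p := by
    intro Φ j x hx
    exact hBp _ (slot_index j.2 (hσ _ (hinvE Φ x hx).1))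
  have hsingle : ∀ i : (VH ↪ Fin n) × Fin J, μ.real (ev E σ B i.1 i.2) = p ^ m := by
    intro i
    rw [ev_eq, hμ, pi_constraint ν B p _ _ (hpr i.1 i.2), hcard]
  have hover : ∀ Φ Φ' : VH ↪ Fin n, (E.image (Sym2.map Φ) ∩ E.image (Sym2.map Φ')) =
      (overlap E Φ Φ').image (Sym2.map Φ) := by
    intro Φ Φ'
    ext x
    simp only [overlap, Finset.mem_inter, Finset.mem_image, Finset.mem_filter]
    constructor
    · rintro ⟨⟨e, he, rfl⟩, e', he', h⟩
      exact ⟨e, ⟨he, e', he', h⟩, rfl⟩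
    · rintro ⟨e, ⟨he, e', he', h⟩, rfl⟩
      exact ⟨⟨e, he, rfl⟩, e', he', h⟩
  have hoc : ∀ Φ Φ' : VH ↪ Fin n, (E.image (Sym2.map Φ) ∪ E.image (Sym2.map Φ')).card =
      2 * m - (overlap E Φ Φ').card := by
    intro Φ Φ'
    have h1 := Finset.card_union_add_card_inter (E.image (Sym2.map Φ)) (E.image (Sym2.map Φ'))
    rw [hover, Finset.card_image_of_injective _ (Sym2.map.injective Φ.injective), hcard,
      hcard] at h1
    omega
  have hpair : ∀ i i' : (VH ↪ Fin n) × Fin J,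
      μ.real (ev E σ B i.1 i.2 ∩ ev E σ B i'.1 i'.2) ≤ p ^ (2 * m) +
        if i.2 = i'.2 then (if (overlap E i.1 i'.1).Nonempty then
          p ^ (2 * m - (overlap E i.1 i'.1).card) else 0) else 0 := by
    rintro ⟨Φ, j⟩ ⟨Φ', j'⟩
    simp only
    have hub : μ.real (ev E σ B Φ j ∩ ev E σ B Φ' j') ≤
        p ^ (2 * m - (overlap E Φ Φ').card) := by
      set t : Sym2 (Fin n) → ℕ := fun x => if x ∈ E.image (Sym2.map Φ) then
        (j:ℕ) * m + σ (Function.invFun (Sym2.map Φ) x) else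
        (j':ℕ) * m + σ (Function.invFun (Sym2.map Φ') x) with ht
      rw [← hoc, ← pi_constraint ν B p (E.image (Sym2.map Φ) ∪ E.image (Sym2.map Φ')) t]
      · apply measureReal_mono _ (measure_ne_top _ _)
        rw [ev_eq, ev_eq]
        rintro ω ⟨h1, h2⟩ x hx
        simp only [ht]
        split_ifs with h
        · exact h1 x h
        · exact h2 x ((Finset.mem_union.1 hx).resolve_left h)
      · intro x hx
        simp only [ht]
        split_ifs with h
        · exact hpr Φ j x h
        · exact hpr Φ' j' x ((Finset.mem_union.1 hx).resolve_left h)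
    by_cases hne : (overlap E Φ Φ').Nonempty
    · by_cases hj : j = j'
      · simp only [hj, hne, if_true]
        rw [hj] at hub
        linarith [pow_pos hp (2 * m)]
      · have : ev E σ B Φ j ∩ ev E σ B Φ' j' = ∅ := by
          rw [eq_empty_iff_forall_notMem]
          rintro ω ⟨h1, h2⟩
          obtain ⟨e, he⟩ := hne
          simp only [overlap, Finset.mem_filter, Finset.mem_image] at he
          obtain ⟨he, e', he', hee⟩ := he
          have a1 := h1 e he
          have a2 := h2 e' he'
          rw [hee] at a2
          refine hdis _ _ ?_ _ a1 a2
          intro heq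
          have s1 := hσ e he
          have s2 := hσ e' he'
          apply hj
          have d1 : ((j:ℕ) * m + σ e) / m = j := by
            rw [mul_comm, Nat.mul_add_div (by omega), Nat.div_eq_of_lt s1, add_zero]
          have d2 : ((j':ℕ) * m + σ e') / m = j' := by
            rw [mul_comm, Nat.mul_add_div (by omega), Nat.div_eq_of_lt s2, add_zero]
          apply Fin.ext
          rw [← d1, ← d2, heq]
        rw [this]
        simp [hj]
        positivity
    · rw [Finset.not_nonempty_iff_eq_empty] at hne
      rw [hne] at hub ⊢
      simpa using hub
  -- Second moment
  have hsm := second_moment μ (fun i : (VH ↪ Fin n) × Fin J => ev E σ B i.1 i.2)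
    (fun i => ev_meas E σ B hB _ _)
  have hM : ∑ i : (VH ↪ Fin n) × Fin J, μ.real (ev E σ B i.1 i.2) = N * J * p ^ m := by
    rw [Finset.sum_congr rfl fun i _ => hsingle i]
    simp [hNdef]
  rw [hM] at hsm
  have hT : ∑ i : (VH ↪ Fin n) × Fin J, ∑ i' : (VH ↪ Fin n) × Fin J,
      μ.real (ev E σ B i.1 i.2 ∩ ev E σ B i'.1 i'.2) ≤ (N * J * p ^ m) ^ 2 +
      J * ∑ x : (VH ↪ Fin n) × (VH ↪ Fin n), (if (overlap E x.1 x.2).Nonempty then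
          p ^ (2 * m - (overlap E x.1 x.2).card) else 0) := by
    refine (Finset.sum_le_sum fun i _ => Finset.sum_le_sum fun i' _ => hpair i i').trans
      (le_of_eq ?_)
    simp only [Finset.sum_add_distrib]
    congr 1
    · simp [hNdef]; ring
    · simp only [Fintype.sum_prod_type, Finset.sum_ite_eq, Finset.mem_univ, if_true]
      rw [Finset.mul_sum]
      refine Finset.sum_congr rfl fun Φ _ => ?_
      simp
  have hS : ∑ x : (VH ↪ Fin n) × (VH ↪ Fin n), (if (overlap E x.1 x.2).Nonempty then
          p ^ (2 * m - (overlap E x.1 x.2).card) else 0) =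
      ∑ S ∈ E.powerset.filter (fun S => S.Nonempty),
        (((Finset.univ : Finset ((VH ↪ Fin n) × (VH ↪ Fin n))).filter
          fun x => overlap E x.1 x.2 = S).card : ℝ) * p ^ (2 * m - S.card) := by
    rw [← Finset.sum_filter, ← Finset.sum_fiberwise_of_maps_to
      (t := E.powerset.filter (fun S => S.Nonempty)) (g := fun x => overlap E x.1 x.2)]
    · refine Finset.sum_congr rfl fun S hS => ?_
      rw [Finset.filter_filter, ← nsmul_eq_mul, ← Finset.sum_const]
      have : ((Finset.univ : Finset ((VH ↪ Fin n) × (VH ↪ Fin n))).filter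
          fun x => (overlap E x.1 x.2).Nonempty ∧ overlap E x.1 x.2 = S) =
          Finset.univ.filter fun x => overlap E x.1 x.2 = S := by
        apply Finset.filter_congr
        intro x _
        constructor
        · exact fun h => h.2
        · intro h; exact ⟨h ▸ (Finset.mem_filter.1 hS).2, h⟩
      rw [this]
      refine Finset.sum_congr rfl fun x hx => ?_
      rw [(Finset.mem_filter.1 hx).2]
    · intro x hx
      simp only [Finset.mem_filter, Finset.mem_univ, true_and, Finset.mem_powerset] at hx ⊢
      exact ⟨Finset.filter_subset _ _, hx⟩
  have hJ' : (0:ℝ) < J := by exact_mod_cast hJ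
  have hn' : (0:ℝ) < n := by exact_mod_cast hn
  have hNpos : 0 < N := by
    have : (0:ℝ) < (n:ℝ) ^ v := by positivity
    by_contra h
    have h2 : (2:ℝ) ^ v * N ≤ 0 := mul_nonpos_of_nonneg_of_nonpos (by positivity) (not_lt.1 h)
    linarith
  have hterm : ∀ S ∈ E.powerset.filter (fun S => S.Nonempty),
      (J : ℝ) * ((((Finset.univ : Finset ((VH ↪ Fin n) × (VH ↪ Fin n))).filter
          fun x => overlap E x.1 x.2 = S).card : ℝ) * p ^ (2 * m - S.card)) ≤
      ((v : ℝ) ^ v * 4 ^ v) / (J * p ^ S.card * (n : ℝ) ^ (vset S).card) *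
        (N * J * p ^ m) ^ 2 := by
    intro S hS
    have hc := count_overlap (n := n) E S
    rw [← hv] at hc
    set c : ℝ := (((Finset.univ : Finset ((VH ↪ Fin n) × (VH ↪ Fin n))).filter
          fun x => overlap E x.1 x.2 = S).card : ℝ)
    have hSm : S.card ≤ 2 * m := by
      have := Finset.card_le_card (Finset.mem_powerset.1 (Finset.mem_filter.1 hS).1)
      omega
    have hpp : p ^ (2 * m - S.card) * p ^ S.card = p ^ (2 * m) := by
      rw [← pow_add, Nat.sub_add_cancel hSm]
    have hn2 : (n : ℝ) ^ (2 * v) ≤ 4 ^ v * N ^ 2 := by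
      calc (n : ℝ) ^ (2 * v) = ((n : ℝ) ^ v) ^ 2 := by rw [← pow_mul, mul_comm]
        _ ≤ (2 ^ v * N) ^ 2 := by gcongr
        _ = 4 ^ v * N ^ 2 := by
          rw [mul_pow, ← pow_mul, mul_comm v 2, pow_mul]; norm_num
    rw [div_mul_eq_mul_div, le_div_iff₀ (by positivity)]
    calc (J:ℝ) * (c * p ^ (2 * m - S.card)) * (J * p ^ S.card * (n : ℝ) ^ (vset S).card)
        = (J:ℝ) ^ 2 * (p ^ (2 * m - S.card) * p ^ S.card) * (c * (n : ℝ) ^ (vset S).card) := by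
          ring
      _ ≤ (J:ℝ) ^ 2 * p ^ (2 * m) * ((v : ℝ) ^ v * (4 ^ v * N ^ 2)) := by
          rw [hpp]
          exact mul_le_mul_of_nonneg_left
            (hc.trans (mul_le_mul_of_nonneg_left hn2 (by positivity))) (by positivity)
      _ = _ := by ring
  have hfin : (1 - μ.real (⋃ i : (VH ↪ Fin n) × Fin J, ev E σ B i.1 i.2)) *
      (N * J * p ^ m) ^ 2 ≤ (∑ S ∈ E.powerset.filter (fun S => S.Nonempty),
        ((v : ℝ) ^ v * 4 ^ v) / (J * p ^ S.card * (n : ℝ) ^ (vset S).card)) *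
        (N * J * p ^ m) ^ 2 := by
    rw [Finset.sum_mul]
    refine le_trans ?_ (Finset.sum_le_sum hterm)
    rw [← Finset.mul_sum, ← hS]
    linarith
  exact le_of_mul_le_mul_right hfin (by positivity)

end counting

section final

variable {VH : Type} [Fintype VH] [DecidableEq VH]

lemma sparsity_le (H : SimpleGraph VH) (S : Finset (Sym2 VH)) (hS : ∀ e ∈ S, e ∈ H.edgeSet)
    (h2 : 2 ≤ S.card) : sparsity H ≤ ((vset S).card : ℝ) / ((S.card : ℝ) - 1) := by
  let I : H.Subgraph :=
    { verts := (vset S : Set VH)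
      Adj := fun a b => s(a, b) ∈ S
      adj_sub := fun {a b} h => by simpa using hS _ h
      edge_vert := fun {a b} h => by
        rw [Finset.mem_coe, mem_vset]; exact ⟨_, h, Sym2.mem_mk_left _ _⟩
      symm := ⟨fun a b h => by rw [Sym2.eq_swap]; exact h⟩ }
  have hI : I.edgeSet = (S : Set (Sym2 VH)) := by
    ext e
    induction e using Sym2.ind with
    | _ a b => rw [SimpleGraph.Subgraph.mem_edgeSet]; rfl
  apply csInf_le
  · refine ⟨0, ?_⟩
    rintro x ⟨I', h, rfl⟩
    have : (2:ℝ) ≤ (I'.edgeSet.ncard : ℝ) := by exact_mod_cast h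
    exact div_nonneg (by positivity) (by linarith)
  · refine ⟨I, ?_, ?_⟩
    · rw [hI, Set.ncard_coe_finset]; exact h2
    · rw [hI, Set.ncard_coe_finset, Set.ncard_coe_finset]

lemma ev_contains (H : SimpleGraph VH) (P : Sym2 VH → Sym2 VH → Prop)
    (hP : StrictPartialOrderOn H.edgeSet P) (E : Finset (Sym2 VH))
    (hE : ∀ e, e ∈ E ↔ e ∈ H.edgeSet) (σ : Sym2 VH → ℕ) (hσ : ∀ e ∈ E, σ e < E.card)
    (hσP : ∀ e f, P e f → σ e < σ f) (δ : ℝ) (hδ : 0 < δ) {n : ℕ} (Φ : VH ↪ Fin n) (j : ℕ)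
    (hm : 0 < E.card) (ω : Sym2 (Fin n) → LabelSpace)
    (hω : ω ∈ ev E σ (slot (δ / E.card)) Φ j) : Contains H P (toTGraph ω) δ := by
  classical
  have hm' : (0:ℝ) < E.card := by exact_mod_cast hm
  set w := δ / E.card with hw
  have hw0 : 0 < w := by positivity
  have hwm : E.card * w = δ := by rw [hw]; field_simp
  set lab : Sym2 VH → ℝ := fun e => if h : 0 < (ω (Sym2.map Φ e)).1 then
    (ω (Sym2.map Φ e)).2 ⟨0, h⟩ else 0 with hlab
  have key : ∀ e ∈ E, lab e ∈ Finset.image (ω (Sym2.map Φ e)).2 Finset.univ ∧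
      ((j:ℝ) * E.card + σ e) * w < lab e ∧ lab e ≤ ((j:ℝ) * E.card + σ e + 1) * w := by
    intro e he
    obtain ⟨h, h1, h2⟩ := hω e he
    have : lab e = (ω (Sym2.map Φ e)).2 ⟨0, h⟩ := by simp only [hlab]; rw [dif_pos h]
    rw [this]
    push_cast at h1 h2
    exact ⟨Finset.mem_image_of_mem _ (Finset.mem_univ _), h1, h2⟩
  refine ⟨Φ, Φ.injective, lab, ?_, ?_, ?_⟩
  · intro e he
    have hd : ¬ (Sym2.map Φ e).IsDiag := by
      rw [Sym2.isDiag_map Φ.injective]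
      exact H.not_isDiag_of_mem_edgeSet he
    rw [toTGraph, if_neg hd]
    exact (key e ((hE e).2 he)).1
  · intro e f h
    obtain ⟨he, hf⟩ := hP.2.2 e f h
    obtain ⟨_, _, h1⟩ := key e ((hE e).2 he)
    obtain ⟨_, h2, _⟩ := key f ((hE f).2 hf)
    refine h1.trans_lt (lt_of_le_of_lt ?_ h2)
    have : (σ e : ℝ) + 1 ≤ σ f := by exact_mod_cast hσP e f h
    apply mul_le_mul_of_nonneg_right _ hw0.le
    linarith
  · intro e he f hf
    obtain ⟨_, _, h1⟩ := key e ((hE e).2 he)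
    obtain ⟨_, h2, _⟩ := key f ((hE f).2 hf)
    have a1 : (σ e : ℝ) + 1 ≤ E.card := by exact_mod_cast hσ e ((hE e).2 he)
    have a2 : (0:ℝ) ≤ σ f := by positivity
    have b1 : ((j:ℝ) * E.card + σ e + 1) * w ≤ ((j:ℝ) * E.card + E.card) * w :=
      mul_le_mul_of_nonneg_right (by linarith) hw0.le
    have b2 : ((j:ℝ) * E.card) * w ≤ ((j:ℝ) * E.card + σ f) * w :=
      mul_le_mul_of_nonneg_right (by linarith) hw0.le
    have b3 : ((j:ℝ) * E.card + E.card) * w = ((j:ℝ) * E.card) * w + δ := by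
      rw [add_mul, hwm]
    linarith

/-- Each denominator of the error bound tends to infinity. -/
lemma denom_tendsto (H : SimpleGraph VH) (S : Finset (Sym2 VH)) (hne : S.Nonempty)
    (hS : ∀ e ∈ S, e ∈ H.edgeSet) (δ : ℕ → ℝ) (hδ : ∀ n, δ n ∈ Set.Ioo (0 : ℝ) 1)
    (hthr : Tendsto (fun n : ℕ => δ n * (n : ℝ) ^ sparsity H) atTop atTop)
    (c : ℝ) (hc : 0 < c) :
    Tendsto (fun n : ℕ => (⌊1 / δ n⌋₊ : ℝ) * (c * δ n) ^ S.card * (n : ℝ) ^ (vset S).card)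
      atTop atTop := by
  have hJ : ∀ n, 1 / 2 ≤ (⌊1 / δ n⌋₊ : ℝ) * δ n := by
    intro n
    obtain ⟨h0, h1⟩ := hδ n
    have a1 : 1 / δ n < (⌊1 / δ n⌋₊ : ℝ) + 1 := Nat.lt_floor_add_one _
    have a2 : (1:ℝ) ≤ (⌊1 / δ n⌋₊ : ℝ) := by
      have : 1 ≤ ⌊1 / δ n⌋₊ := Nat.le_floor (by
        rw [Nat.cast_one, le_div_iff₀ h0]; linarith)
      exact_mod_cast this
    have a3 : 1 / δ n ≤ 2 * (⌊1 / δ n⌋₊ : ℝ) := by linarith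
    rw [div_le_iff₀ h0] at a3
    linarith
  obtain ⟨k, hk⟩ : ∃ k, S.card = k + 1 := ⟨S.card - 1, by have := hne.card_pos; omega⟩
  have hlow : ∀ n : ℕ, c / 2 * ((c * δ n) ^ k * (n : ℝ) ^ (vset S).card) ≤
      (⌊1 / δ n⌋₊ : ℝ) * (c * δ n) ^ S.card * (n : ℝ) ^ (vset S).card := by
    intro n
    have h0 := (hδ n).1
    rw [hk]
    calc c / 2 * ((c * δ n) ^ k * (n : ℝ) ^ (vset S).card)
        = (1 / 2) * (c * ((c * δ n) ^ k * (n : ℝ) ^ (vset S).card)) := by ring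
      _ ≤ ((⌊1 / δ n⌋₊ : ℝ) * δ n) * (c * ((c * δ n) ^ k * (n : ℝ) ^ (vset S).card)) :=
          mul_le_mul_of_nonneg_right (hJ n) (by positivity)
      _ = _ := by ring
  refine tendsto_atTop_mono hlow (Tendsto.const_mul_atTop (by positivity) ?_)
  rcases Nat.eq_zero_or_pos k with rfl | hk0
  · simp only [pow_zero, one_mul]
    have hv : (vset S).card ≠ 0 := by
      obtain ⟨e, he⟩ := hne
      induction e using Sym2.ind with
      | _ a b =>
        exact Finset.card_ne_zero_of_mem ((mem_vset S a).2 ⟨_, he, Sym2.mem_mk_left _ _⟩)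
    exact (tendsto_pow_atTop hv).comp tendsto_natCast_atTop_atTop
  · have hsp := sparsity_le H S hS (by omega)
    have hk' : (0:ℝ) < k := by exact_mod_cast hk0
    rw [hk] at hsp
    push_cast at hsp
    rw [add_sub_cancel_right, le_div_iff₀ hk'] at hsp
    have ht : Tendsto (fun n : ℕ => (c * (δ n * (n : ℝ) ^ sparsity H)) ^ k) atTop atTop :=
      (tendsto_pow_atTop hk0.ne').comp (Tendsto.const_mul_atTop hc hthr)
    refine tendsto_atTop_mono' _ ?_ ht
    filter_upwards [eventually_ge_atTop 1] with n hn
    have hn' : (1:ℝ) ≤ n := by exact_mod_cast hn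
    have h0 := (hδ n).1
    have : ((n : ℝ) ^ sparsity H) ^ k ≤ (n : ℝ) ^ (vset S).card := by
      rw [← Real.rpow_natCast, ← Real.rpow_mul (by positivity), ← Real.rpow_natCast]
      exact Real.rpow_le_rpow_of_exponent_le hn' hsp
    calc (c * (δ n * (n : ℝ) ^ sparsity H)) ^ k
        = (c * δ n) ^ k * ((n : ℝ) ^ sparsity H) ^ k := by rw [← mul_pow]; ring
      _ ≤ _ := mul_le_mul_of_nonneg_left this (by positivity)

end final

/-- If `δ(n)·n^{ρ_H} → ∞`, then a sample of `Γ_{[n]}(ψ)` contains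
`(H, P)` as a `δ(n)`-temporal motif with high probability. -/
theorem statement0 {VH : Type} [Fintype VH] [DecidableEq VH] (H : SimpleGraph VH)
    (hH : 2 ≤ H.edgeSet.ncard)
    (P : Sym2 VH → Sym2 VH → Prop) (hP : StrictPartialOrderOn H.edgeSet P)
    (ψ : Measure ℕ) (hψ : IsLMD ψ)
    (δ : ℕ → ℝ) (hδ : ∀ n, δ n ∈ Set.Ioo (0 : ℝ) 1)
    (hthr : Tendsto (fun n : ℕ => δ n * (n : ℝ) ^ sparsity H) atTop atTop) :
    Tendsto (fun n : ℕ =>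
        contModel (Fin n) ψ {ω | Contains H P (toTGraph ω) (δ n)})
      atTop (𝓝 1) := by
  classical
  have hprob : IsProbabilityMeasure ψ := hψ.1
  have hedge : IsProbabilityMeasure (edgeMeasure unif01 ψ) := edgeMeasure_prob ψ
  set q := ψ.real {k | 0 < k} with hq
  have hq0 : 0 < q := lmd_pos ψ hψ
  set E : Finset (Sym2 VH) := H.edgeSet.toFinite.toFinset with hEdef
  have hE : ∀ e, e ∈ E ↔ e ∈ H.edgeSet := by intro e; simp [hEdef]
  have hm : 2 ≤ E.card := by rwa [hEdef, ← Set.ncard_eq_toFinset_card]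
  have hm' : (0:ℝ) < E.card := by exact_mod_cast (by omega : 0 < E.card)
  set σ : Sym2 VH → ℕ := fun e => (E.filter fun f => P f e).card with hσdef
  have hσ : ∀ e ∈ E, σ e < E.card := by
    intro e he
    apply Finset.card_lt_card
    refine (Finset.filter_subset _ _).ssubset_of_ne ?_
    intro h
    rw [← h, Finset.mem_filter] at he
    exact hP.1 e he.2
  have hσP : ∀ e f, P e f → σ e < σ f := by
    intro e f h
    apply Finset.card_lt_card
    rw [Finset.ssubset_iff_of_subset]
    · refine ⟨e, Finset.mem_filter.2 ⟨(hE e).2 (hP.2.2 e f h).1, h⟩, ?_⟩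
      intro h'
      exact hP.1 e (Finset.mem_filter.1 h').2
    · intro x hx
      rw [Finset.mem_filter] at hx ⊢
      exact ⟨hx.1, hP.2.1 x e f hx.2 h⟩
  set v := Fintype.card VH with hv
  set c := q / E.card with hcdef
  have hc : 0 < c := by positivity
  set err : ℕ → ℝ := fun n => ∑ S ∈ E.powerset.filter (fun S => S.Nonempty),
        ((v : ℝ) ^ v * 4 ^ v) /
          ((⌊1 / δ n⌋₊ : ℝ) * (c * δ n) ^ S.card * (n : ℝ) ^ (vset S).card) with herr
  have herr0 : Tendsto err atTop (𝓝 0) := by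
    have : (0:ℝ) = ∑ S ∈ E.powerset.filter (fun S => S.Nonempty), 0 := by simp
    rw [this]
    refine tendsto_finsetSum _ fun S hS => ?_
    rw [Finset.mem_filter, Finset.mem_powerset] at hS
    exact (denom_tendsto H S hS.2 (fun e he => (hE e).1 (hS.1 he)) δ hδ hthr c hc).const_div_atTop _
  have hlow : ∀ᶠ n : ℕ in atTop, ENNReal.ofReal (1 - err n) ≤
      contModel (Fin n) ψ {ω | Contains H P (toTGraph ω) (δ n)} := by
    filter_upwards [eventually_ge_atTop (2 * v + 1)] with n hn
    obtain ⟨hδ0, hδ1⟩ := hδ n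
    have hN : (n : ℝ) ^ v ≤ 2 ^ v * (Fintype.card (VH ↪ Fin n) : ℝ) := by
      have h1 : (n + 1 - v) ^ v ≤ Fintype.card (VH ↪ Fin n) := by
        rw [Fintype.card_embedding_eq, Fintype.card_fin]
        exact Nat.pow_sub_le_descFactorial _ _
      have h2 : n ^ v ≤ 2 ^ v * Fintype.card (VH ↪ Fin n) :=
        calc n ^ v ≤ (2 * (n + 1 - v)) ^ v := Nat.pow_le_pow_left (by omega) _
          _ = 2 ^ v * (n + 1 - v) ^ v := mul_pow _ _ _
          _ ≤ _ := Nat.mul_le_mul_left _ h1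
      exact_mod_cast h2
    have hw : 0 < δ n / E.card := by positivity
    have hJ : 0 < ⌊1 / δ n⌋₊ := Nat.floor_pos.2 (by rw [le_div_iff₀ hδ0]; linarith)
    have hJδ : (⌊1 / δ n⌋₊ : ℝ) * δ n ≤ 1 := by
      rw [← le_div_iff₀ hδ0]; exact Nat.floor_le (by positivity)
    have hb := motif_bound (edgeMeasure unif01 ψ) E (Finset.card_pos.1 (by omega)) σ hσ
      (slot (δ n / E.card)) (measurableSet_slot _)
      (fun t t' h l h1 h2 => slot_disjoint hw h h1 h2) (c * δ n) (by positivity)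
      ⌊1 / δ n⌋₊ hJ (by
        intro t ht
        rw [edgeMeasure_slot ψ _ hw t, hcdef]
        · ring
        · have h1 : (t:ℝ) + 1 ≤ (⌊1 / δ n⌋₊ : ℝ) * E.card := by exact_mod_cast ht
          calc ((t:ℝ) + 1) * (δ n / E.card) ≤
              ((⌊1 / δ n⌋₊ : ℝ) * E.card) * (δ n / E.card) :=
                mul_le_mul_of_nonneg_right h1 hw.le
            _ = (⌊1 / δ n⌋₊ : ℝ) * δ n := by field_simp
            _ ≤ 1 := hJδ) n (by omega) hN
    refine le_trans ?_ (measure_mono (s := ⋃ i : (VH ↪ Fin n) × Fin ⌊1 / δ n⌋₊,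
      ev E σ (slot (δ n / E.card)) i.1 i.2) ?_)
    · apply ENNReal.ofReal_le_of_le_toReal
      change 1 - err n ≤ (Measure.pi fun _ : Sym2 (Fin n) => edgeMeasure unif01 ψ).real _
      have : err n = _ := rfl
      linarith
    · intro ω hω
      obtain ⟨i, hi⟩ := mem_iUnion.1 hω
      exact ev_contains H P hP E hE σ hσ hσP (δ n) hδ0 i.1 i.2 (by omega) ω hi
  have hlim : Tendsto (fun n => ENNReal.ofReal (1 - err n)) atTop (𝓝 1) := by
    have : Tendsto (fun n => 1 - err n) atTop (𝓝 (1 - 0)) := tendsto_const_nhds.sub herr0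
    have := ENNReal.tendsto_ofReal this
    simpa using this
  refine tendsto_of_tendsto_of_tendsto_of_le_of_le' hlim tendsto_const_nhds hlow ?_
  refine Eventually.of_forall fun n => ?_
  have : IsProbabilityMeasure (contModel (Fin n) ψ) := by
    unfold contModel model; infer_instance
  exact prob_le_one

end RTG
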